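/- Let g be a finite-dimensional semisimple complex Lie algebra graded by Z/3Z, g = g_0 ⊕ g_1 ⊕ g_2, such that g_0 is an abelian subalgebra of dimension 6 whose adjoint action on g_1 and on g_2 is semisimple, and dim g = 24. Then g_0 is a Cartan subalgebra of g. -/

import Mathlib

/-!
Let `p` be prime and `g` a grading by `ℤ/pℤ`, and let `y ∈ g k`, `k ≠ 0`, centralize `g 0`. By
invariance of the Killing form `κ`, `κ([y, w], v) = -κ(w, [y, v]) = 0` for all `w ∈ g (-k)` and
`v ∈ g 0`; since `κ` pairs `g i` nondegenerately with `g (-i)`, this forces `[y, w] = 0`. As `k`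
generates `ℤ/pℤ`, iterating `ad y` moves every degree through `0`, where `ad y` vanishes, so
`ad y` is nilpotent. Hence `κ(y, w) = tr (ad y ∘ ad w) = 0` for all `w ∈ g (-k)`, and so `y = 0`.
The components of nonzero degree of an element normalizing `g 0` centralize `g 0`, so they vanish:
`g 0` is self-normalizing.
-/

section GradedLieAlgebra

open LieAlgebra SetLike.GradedBracket

section CommRing

variable {R L : Type*} [CommRing R] [LieRing L] [LieAlgebra R L]

section AddCommMonoid

variable {ι : Type*} [DecidableEq ι] [AddCommMonoid ι] (g : ι → Submodule R L) [GradedLieAlgebra g]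

/-- The degree-zero component of a graded Lie algebra, as a Lie subalgebra; it is the
candidate for a Cartan subalgebra. -/
def gradeZeroLieSubalgebra : LieSubalgebra R L where
  __ := g 0
  lie_mem' hx hy := (add_zero (0 : ι) ▸ bracket_mem (ℒ := g) hx hy :)

theorem ad_pow_apply_mem {i j : ι} {x y : L} (hx : x ∈ g i) (hy : y ∈ g j) (n : ℕ) :
    (ad R L x ^ n) y ∈ g (n • i + j) := by
  induction n with
  | zero => simpa using hy
  | succ n ih =>
    rw [pow_succ', succ_nsmul', add_assoc]
    exact bracket_mem hx ih

theorem decompose_lie_of_mem_zero {a : L} (ha : a ∈ g 0) (x : L) (i : ι) :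
    (DirectSum.decompose g ⁅a, x⁆ i : L) = ⁅a, (DirectSum.decompose g x i : L)⁆ := by
  induction x using DirectSum.Decomposition.inductionOn g with
  | zero => simp
  | @homogeneous j x =>
    have hax : ⁅a, (x : L)⁆ ∈ g j := by simpa only [zero_add] using bracket_mem (ℒ := g) ha x.2
    by_cases hij : j = i
    · subst hij
      rw [DirectSum.decompose_of_mem_same g hax, DirectSum.decompose_of_mem_same g x.2]
    · rw [DirectSum.decompose_of_mem_ne g hax hij, DirectSum.decompose_of_mem_ne g x.2 hij,
        lie_zero]
  | add x y hx hy =>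
    simp only [lie_add, DirectSum.decompose_add, DirectSum.add_apply, Submodule.coe_add, hx, hy]

theorem lie_decompose_eq_zero_of_mem_normalizer {x : L}
    (hx : x ∈ (gradeZeroLieSubalgebra g).normalizer) {i : ι} (hi : i ≠ 0) {a : L} (ha : a ∈ g 0) :
    ⁅a, (DirectSum.decompose g x i : L)⁆ = 0 := by
  rw [← decompose_lie_of_mem_zero g ha]
  exact DirectSum.decompose_of_mem_ne g
    ((LieSubalgebra.mem_normalizer_iff' _ x).mp hx a ha) hi.symm

end AddCommMonoid

theorem isNilpotent_ad_of_lie_gradeZero_eq_zero {p : ℕ} [Fact p.Prime]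
    (g : ZMod p → Submodule R L) [GradedLieAlgebra g] {k : ZMod p} (hk : k ≠ 0) {y : L}
    (hy : y ∈ g k) (hcent : ∀ a ∈ g 0, ⁅y, a⁆ = 0) : IsNilpotent (ad R L y) := by
  refine ⟨p, LinearMap.ext fun x ↦ ?_⟩
  induction x using DirectSum.Decomposition.inductionOn g with
  | zero => simp
  | @homogeneous j x =>
    let n := (-j / k).val
    have hn : n • k + j = 0 := by simp [n, hk]
    have hpow : (ad R L y ^ (n + 1)) x = 0 := by
      rw [pow_succ']
      exact hcent _ (hn ▸ ad_pow_apply_mem g hy x.2 n)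
    exact Module.End.pow_map_zero_of_le (ZMod.val_lt _) hpow
  | add x y hx hy => rw [map_add, hx, hy, map_add]

end CommRing

section KillingForm

variable {K L : Type*} [Field K] [LieRing L] [LieAlgebra K L] [FiniteDimensional K L]

section AddCommGroup

variable {ι : Type*} [DecidableEq ι] [AddCommGroup ι] (g : ι → Submodule K L) [GradedLieAlgebra g]

theorem killingForm_apply_eq_zero_of_mem_of_add_ne_zero {i j : ι} (hij : i + j ≠ 0) {x y : L}
    (hx : x ∈ g i) (hy : y ∈ g j) : killingForm K L x y = 0 := by
  have hshift (k : ι) : i + (j + k) ≠ k := by simpa only [← add_assoc] using add_ne_right.mpr hij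
  exact LinearMap.trace_eq_zero_of_mapsTo_ne (DirectSum.Decomposition.isInternal g) _ hshift
    fun _ _ hv ↦ bracket_mem hx (bracket_mem hy hv)

variable [IsKilling K L]

theorem eq_zero_of_mem_of_forall_killingForm_eq_zero {i : ι} {x : L} (hx : x ∈ g i)
    (horth : ∀ y ∈ g (-i), killingForm K L x y = 0) : x = 0 := by
  rw [← Submodule.mem_bot K, ← IsKilling.ker_killingForm_eq_bot K L, LinearMap.mem_ker]
  ext y
  induction y using DirectSum.Decomposition.inductionOn g with
  | zero => simp
  | @homogeneous j y =>
    by_cases hij : i + j = 0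
    · exact horth y (neg_eq_of_add_eq_zero_right hij ▸ y.2)
    · exact killingForm_apply_eq_zero_of_mem_of_add_ne_zero g hij hx y.2
  | add y z hy hz => rw [map_add, hy, hz, map_add]

theorem lie_eq_zero_of_lie_gradeZero_eq_zero {k : ι} {y w : L} (hy : y ∈ g k)
    (hcent : ∀ a ∈ g 0, ⁅y, a⁆ = 0) (hw : w ∈ g (-k)) : ⁅y, w⁆ = 0 := by
  have hyw : ⁅y, w⁆ ∈ g 0 := by simpa only [add_neg_cancel] using bracket_mem (ℒ := g) hy hw
  refine eq_zero_of_mem_of_forall_killingForm_eq_zero g hyw fun v hv ↦ ?_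
  rw [neg_zero] at hv
  rw [← lie_skew, map_neg, LinearMap.neg_apply, LieModule.traceForm_apply_lie_apply, hcent v hv,
    map_zero, neg_zero]

end AddCommGroup

variable [IsKilling K L] {p : ℕ} [Fact p.Prime] (g : ZMod p → Submodule K L) [GradedLieAlgebra g]

theorem eq_zero_of_lie_gradeZero_eq_zero {k : ZMod p} (hk : k ≠ 0) {y : L} (hy : y ∈ g k)
    (hcent : ∀ a ∈ g 0, ⁅y, a⁆ = 0) : y = 0 := by
  refine eq_zero_of_mem_of_forall_killingForm_eq_zero g hy fun w hw ↦ ?_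
  have hcomm : Commute (ad K L y) (ad K L w) := by
    refine LinearMap.ext fun v ↦ ?_
    simp only [Module.End.mul_apply, ad_apply]
    rw [leibniz_lie, lie_eq_zero_of_lie_gradeZero_eq_zero g hy hcent hw, zero_lie, zero_add]
  have hnil := isNilpotent_ad_of_lie_gradeZero_eq_zero g hk hy hcent
  exact (LinearMap.isNilpotent_trace_of_isNilpotent (hcomm.isNilpotent_mul_right hnil)).eq_zero

theorem normalizer_gradeZeroLieSubalgebra :
    (gradeZeroLieSubalgebra g).normalizer = gradeZeroLieSubalgebra g := by
  classical
  refine le_antisymm (fun x hx ↦ ?_) (LieSubalgebra.le_normalizer _)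
  have hcomponent (i : ZMod p) (hi : i ≠ 0) : (DirectSum.decompose g x i : L) = 0 :=
    eq_zero_of_lie_gradeZero_eq_zero g hi (SetLike.coe_mem _) fun a ha ↦ by
      rw [← lie_skew, lie_decompose_eq_zero_of_mem_normalizer g hx hi ha, neg_zero]
  rw [← DirectSum.sum_support_decompose g x]
  refine sum_mem fun i _ ↦ ?_
  obtain rfl | hi := eq_or_ne i 0
  · exact SetLike.coe_mem _
  · rw [hcomponent i hi]
    exact zero_mem _

theorem cartan_of_z3_graded_semisimple_general [LieRing.IsNilpotent (gradeZeroLieSubalgebra g)] :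
    (gradeZeroLieSubalgebra g).IsCartanSubalgebra :=
  ⟨inferInstance, normalizer_gradeZeroLieSubalgebra g⟩

end KillingForm

end GradedLieAlgebra

/-- Let `g` be a finite-dimensional semisimple complex Lie algebra of dimension 24 with a
`ℤ/3ℤ`-grading `g = g₀ ⊕ g₁ ⊕ g₂` such that `g₀` is an abelian subalgebra of dimension 6
whose adjoint action on `g₁` and on `g₂` is semisimple (each graded piece is spanned by
`ad x`-eigenvectors for every `x ∈ g₀`). Then `g₀` is a Cartan subalgebra of `g`. -/
theorem cartan_of_z3_graded_semisimple
    {L : Type*} [LieRing L] [LieAlgebra ℂ L] [FiniteDimensional ℂ L]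
    [LieAlgebra.IsSemisimple ℂ L]
    (hdim : Module.finrank ℂ L = 24)
    (g : ZMod 3 → Submodule ℂ L)
    (hinternal : DirectSum.IsInternal g)
    (hgrad : ∀ i j : ZMod 3, ∀ x ∈ g i, ∀ y ∈ g j, ⁅x, y⁆ ∈ g (i + j))
    (habelian : ∀ x ∈ g 0, ∀ y ∈ g 0, ⁅x, y⁆ = 0)
    (hdim0 : Module.finrank ℂ (g 0) = 6)
    (hss : ∀ x ∈ g 0, ∀ k : ZMod 3, k ≠ 0 → ∃ s : Set L, s ⊆ g k ∧
      Submodule.span ℂ s = g k ∧ ∀ y ∈ s, ∃ c : ℂ, ⁅x, y⁆ = c • y) :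
    ∃ K : LieSubalgebra ℂ L, (K : Set L) = (g 0 : Set L) ∧ K.IsCartanSubalgebra := by
  let _ : GradedLieAlgebra g :=
    { hinternal.chooseDecomposition with
      bracket_mem := fun i j x y hx hy ↦ hgrad i j x hx y hy }
  have : IsLieAbelian (gradeZeroLieSubalgebra g) :=
    ⟨fun x y ↦ Subtype.ext (habelian x x.2 y y.2)⟩
  exact ⟨gradeZeroLieSubalgebra g, rfl, cartan_of_z3_graded_semisimple_general g⟩
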